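/- Let S = ⟨m, am+1, bm+t⟩ be a MANS-semigroup with embedding dimension 3, where m ≥ 3, a ≥ 1, t ∈ {2, …, m−1}, and (t−1)(am+1) < bm+t < t(am+1). Set q = ⌊(m−1)/t⌋ and r = (m−1) mod t. Then {q(bm+t) + r(am+1) − m} ⊆ PF(S) ⊆ {(q−1)(bm+t) + (t−1)(am+1) − m, q(bm+t) + r(am+1) − m}. -/

import Mathlib

/-- `S ⊆ ℕ` is a numerical semigroup: contains `0`, closed under addition,
and has finite complement in `ℕ`. -/
def IsNumSgp (S : Set ℕ) : Prop :=
  0 ∈ S ∧ (∀ a ∈ S, ∀ b ∈ S, a + b ∈ S) ∧ Sᶜ.Finite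

/-- `⟨A⟩`: the additive submonoid of `ℕ` generated by `A`, viewed as a set. -/
def gen (A : Set ℕ) : Set ℕ := (AddSubmonoid.closure A : Set ℕ)

/-- The multiplicity `m(S)`: the least nonzero element of `S`. -/
noncomputable def nsMult (S : Set ℕ) : ℕ := sInf {x | x ∈ S ∧ x ≠ 0}

/-- The minimal system of generators of `S`: the nonzero elements of `S` that are
not a sum of two nonzero elements of `S`. -/
def msg (S : Set ℕ) : Set ℕ :=
  {x | x ∈ S ∧ x ≠ 0 ∧ ∀ a ∈ S, a ≠ 0 → ∀ b ∈ S, b ≠ 0 → x ≠ a + b}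

/-- The ratio `r(S)`: the second smallest minimal generator of `S`. -/
noncomputable def nsRatio (S : Set ℕ) : ℕ := sInf (msg S \ {nsMult S})

/-- The maximum minimal generator `M(S)`. -/
noncomputable def nsMaxGen (S : Set ℕ) : ℕ := sSup (msg S)

/-- The Apéry set `Ap(S, n) = {s ∈ S : s - n ∉ S}`. -/
def AperySet (S : Set ℕ) (n : ℕ) : Set ℕ :=
  {s | s ∈ S ∧ ¬ ∃ y ∈ S, y + n = s}

/-- `w(i)`: the least element of `S` congruent to `i` modulo `n`. -/
noncomputable def aperyW (S : Set ℕ) (n i : ℕ) : ℕ :=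
  sInf {s | s ∈ S ∧ s % n = i % n}

/-- A MANS-semigroup: a numerical semigroup whose Apéry set with respect to the
multiplicity is monotone, i.e. `w(1) < w(2) < ⋯ < w(m(S) - 1)`. -/
def IsMANS (S : Set ℕ) : Prop :=
  IsNumSgp S ∧ ∀ i : ℕ, 0 < i → i + 1 < nsMult S →
    aperyW S (nsMult S) i < aperyW S (nsMult S) (i + 1)

/-- The Frobenius number `F(S)`: the greatest integer not in `S`. -/
noncomputable def nsFrob (S : Set ℕ) : ℕ := sSup {x | x ∉ S}

/-- The genus `g(S)`: the number of gaps of `S`. -/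
noncomputable def nsGenus (S : Set ℕ) : ℕ := Set.ncard {x | x ∉ S}

/-- The set of pseudo-Frobenius numbers of `S`: integers `x ∉ S` such that
`x + s ∈ S` for every nonzero `s ∈ S`. -/
def nsPF (S : Set ℕ) : Set ℤ :=
  {x : ℤ | x ∉ ((Nat.cast : ℕ → ℤ) '' S) ∧
    ∀ s ∈ S, s ≠ 0 → x + (s : ℤ) ∈ ((Nat.cast : ℕ → ℤ) '' S)}

/-- The type `t(S)`: the number of pseudo-Frobenius numbers of `S`. -/
noncomputable def nsType (S : Set ℕ) : ℕ := (nsPF S).ncard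

/-- `S` is pseudo-symmetric iff `F(S) = 2 g(S) - 2`. -/
def IsPseudoSymmetric (S : Set ℕ) : Prop :=
  (nsFrob S : ℤ) = 2 * (nsGenus S : ℤ) - 2

def ff (u v t n : ℕ) : ℕ := (n / t) * v + (n % t) * u

theorem ff_eq (u v t z y : ℕ) (hy : y < t) : ff u v t (z * t + y) = z * v + y * u := by
  have ht : 0 < t := by omega
  have e1 : (z * t + y) / t = z := by
    rw [mul_comm, Nat.mul_add_div ht, Nat.div_eq_of_lt hy]; rfl
  have e2 : (z * t + y) % t = y := by
    rw [mul_comm, Nat.mul_add_mod, Nat.mod_eq_of_lt hy]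
  simp [ff, e1, e2]

theorem ff_mono (u v t : ℕ) (ht : 2 ≤ t) (h1 : (t - 1) * u < v) : Monotone (ff u v t) := by
  apply monotone_nat_of_le_succ
  intro n
  obtain ⟨z, y, hy, rfl⟩ : ∃ z y, y < t ∧ n = z * t + y :=
    ⟨n / t, n % t, Nat.mod_lt _ (by omega), by rw [mul_comm]; exact (Nat.div_add_mod n t).symm⟩
  rw [ff_eq _ _ _ _ _ hy]
  by_cases h : y + 1 < t
  · rw [add_assoc, ff_eq _ _ _ _ _ h]; nlinarith
  · have hyt : t - 1 = y := by omega
    have e : z * t + y + 1 = (z + 1) * t + 0 := by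
      have : t = y + 1 := by omega
      subst this; ring
    rw [e, ff_eq _ _ _ _ _ (by omega)]
    rw [hyt] at h1
    nlinarith

theorem ff_le (u v t : ℕ) (ht : 2 ≤ t) (h2 : v < t * u) (y z : ℕ) :
    ff u v t (y + z * t) ≤ y * u + z * v := by
  obtain ⟨w, x, hx, rfl⟩ : ∃ w x, x < t ∧ y = w * t + x :=
    ⟨y / t, y % t, Nat.mod_lt _ (by omega), by rw [mul_comm]; exact (Nat.div_add_mod y t).symm⟩
  have e : w * t + x + z * t = (w + z) * t + x := by ring
  rw [e, ff_eq _ _ _ _ _ hx]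
  have := Nat.mul_le_mul_left w h2.le
  nlinarith

theorem mem_gen3 (m u v n : ℕ) :
    n ∈ gen {m, u, v} ↔ ∃ c y z : ℕ, n = c * m + y * u + z * v := by
  unfold gen
  constructor
  · intro h
    change n ∈ AddSubmonoid.closure _ at h
    induction h using AddSubmonoid.closure_induction with
    | mem x hx =>
      rcases hx with rfl | rfl | rfl
      · exact ⟨1, 0, 0, by ring⟩
      · exact ⟨0, 1, 0, by ring⟩
      · exact ⟨0, 0, 1, by ring⟩
    | zero => exact ⟨0, 0, 0, by ring⟩
    | add x y _ _ hx hy =>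
      obtain ⟨c, d, e, rfl⟩ := hx
      obtain ⟨c', d', e', rfl⟩ := hy
      exact ⟨c + c', d + d', e + e', by ring⟩
  · rintro ⟨c, y, z, rfl⟩
    change _ ∈ AddSubmonoid.closure _
    have k : ∀ (c x : ℕ), x ∈ ({m, u, v} : Set ℕ) →
        c * x ∈ AddSubmonoid.closure ({m, u, v} : Set ℕ) := fun c x hx => by
      have := AddSubmonoid.nsmul_mem _ (AddSubmonoid.subset_closure hx) c
      simpa using this
    exact add_mem (add_mem (k _ _ (by simp)) (k _ _ (by simp))) (k _ _ (by simp))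

theorem ff_cong (m a b t n : ℕ) :
    ff (a * m + 1) (b * m + t) t n = n + m * ((n / t) * b + (n % t) * a) := by
  have := Nat.div_add_mod n t
  unfold ff
  nlinarith

theorem mem_gen_iff (m a b t : ℕ) (ht2 : 2 ≤ t)
    (h1 : (t - 1) * (a * m + 1) < b * m + t) (h2 : b * m + t < t * (a * m + 1))
    (i : ℕ) (hi : i < m) (k : ℤ) :
    ((ff (a * m + 1) (b * m + t) t i : ℤ) + m * k ∈
      ((Nat.cast : ℕ → ℤ) '' gen {m, a * m + 1, b * m + t})) ↔ 0 ≤ k := by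
  have hm : (0 : ℤ) < m := by exact_mod_cast (by omega : 0 < m)
  constructor
  · rintro ⟨n, hn, hk⟩
    obtain ⟨c, y, z, rfl⟩ := (mem_gen3 _ _ _ _).1 hn
    have hle := ff_le _ _ t ht2 h2 y z
    have hmod : (i : ℤ) ≡ (y + z * t : ℕ) [ZMOD m] := by
      rw [ff_cong] at hk
      apply Int.modEq_iff_dvd.2
      push_cast at hk ⊢
      refine ⟨((i:ℤ) / t * b + (i:ℤ) % t * a) + k - c - y * a - z * b, ?_⟩
      linarith
    have hmod' : i = (y + z * t) % m := by
      have := (Int.natCast_modEq_iff).1 hmod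
      rw [← this, Nat.mod_eq_of_lt hi]
    have hil : i ≤ y + z * t := hmod' ▸ Nat.mod_le _ _
    have hmono := ff_mono _ _ t ht2 h1 hil
    have : (ff (a * m + 1) (b * m + t) t i : ℤ) ≤
        ((c * m + y * (a * m + 1) + z * (b * m + t) : ℕ) : ℤ) := by
      have := Nat.zero_le (c * m)
      exact_mod_cast (by omega)
    have : 0 ≤ (m : ℤ) * k := by linarith
    exact nonneg_of_mul_nonneg_right this hm
  · intro hk
    lift k to ℕ using hk
    refine ⟨ff (a * m + 1) (b * m + t) t i + m * k, ?_, by push_cast; ring⟩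
    exact (mem_gen3 _ _ _ _).2 ⟨k, i % t, i / t, by unfold ff; ring⟩

theorem repr_int (m a b t : ℕ) (hm : 3 ≤ m) (x : ℤ) :
    ∃ (i : ℕ) (k : ℤ), i < m ∧ x = (ff (a * m + 1) (b * m + t) t i : ℤ) + m * k := by
  have h0 : (0 : ℤ) < m := by exact_mod_cast (by omega : 0 < m)
  have hn := Int.emod_nonneg x h0.ne'
  have hl := Int.emod_lt_of_pos x h0
  have he := Int.mul_ediv_add_emod x m
  obtain ⟨i, hi⟩ := Int.eq_ofNat_of_zero_le hn
  refine ⟨i, x / m - ((i / t : ℕ) * b + (i % t : ℕ) * a), by omega, ?_⟩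
  rw [ff_cong]
  rw [hi] at he
  push_cast at he ⊢
  linarith

theorem stmt12 (m a b t q r : ℕ) (hm : 3 ≤ m) (ha : 1 ≤ a) (ht2 : 2 ≤ t) (htm : t ≤ m - 1)
    (h1 : (t - 1) * (a * m + 1) < b * m + t) (h2 : b * m + t < t * (a * m + 1))
    (hq : q = (m - 1) / t) (hr : r = (m - 1) % t) :
    ({(q : ℤ) * (b * m + t) + (r : ℤ) * (a * m + 1) - m} : Set ℤ)
        ⊆ nsPF (gen {m, a * m + 1, b * m + t}) ∧
      nsPF (gen {m, a * m + 1, b * m + t}) ⊆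
        {((q : ℤ) - 1) * (b * m + t) + ((t : ℤ) - 1) * (a * m + 1) - m,
         (q : ℤ) * (b * m + t) + (r : ℤ) * (a * m + 1) - m} := by
  have key := mem_gen_iff m a b t ht2 h1 h2
  have h0 : (0 : ℤ) < m := by exact_mod_cast (by omega : 0 < m)
  have hF : ((ff (a * m + 1) (b * m + t) t (m - 1) : ℕ) : ℤ)
      = (q : ℤ) * (b * m + t) + (r : ℤ) * (a * m + 1) := by
    unfold ff; rw [← hq, ← hr]; push_cast; ring
  have mono := ff_mono _ _ t ht2 h1
  constructor
  · rintro x rfl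
    rw [← hF]
    refine ⟨?_, ?_⟩
    · intro h
      have := (key (m - 1) (by omega) (-1)).1 (by convert h using 1; ring)
      omega
    · intro s hs hs0
      obtain ⟨j, k, hj, hk⟩ := repr_int m a b t hm s
      have hk0 : 0 ≤ k := (key j hj k).1 ⟨s, hs, hk⟩
      rcases Nat.eq_zero_or_pos j with rfl | hjp
      · have hf0 : ff (a * m + 1) (b * m + t) t 0 = 0 := by simp [ff]
        rw [hf0] at hk
        have hk1 : k ≠ 0 := by
          rintro rfl
          simp at hk; exact hs0 hk
        have := (key (m - 1) (by omega) (k - 1)).2 (by omega)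
        convert this using 1
        rw [hk]; push_cast; ring
      · obtain ⟨i, k', hi, hk'⟩ := repr_int m a b t hm
          ((ff (a * m + 1) (b * m + t) t (m - 1) : ℤ) - m + s)
        rw [hk']
        rw [key i hi]
        have hij : i = j - 1 := by
          have e := hk'
          rw [hk] at e
          simp only [ff_cong] at e
          have hd : (m : ℤ) ∣ (i : ℤ) - ((j : ℤ) - 1) := by
            generalize (m - 1) / t * b + (m - 1) % t * a = A at e
            generalize i / t * b + i % t * a = B at e
            generalize j / t * b + j % t * a = C at e
            push_cast [Nat.cast_sub (by omega : 1 ≤ m)] at e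
            exact ⟨A + C + k - B - k', by linarith⟩
          have := Int.eq_zero_of_abs_lt_dvd hd (by rw [abs_lt]; constructor <;> omega)
          omega
        have g1 : ff (a * m + 1) (b * m + t) t i ≤ ff (a * m + 1) (b * m + t) t j :=
          mono (by omega)
        have g2 : m ≤ ff (a * m + 1) (b * m + t) t (m - 1) := by
          have : ff (a * m + 1) (b * m + t) t 1 ≤ ff (a * m + 1) (b * m + t) t (m - 1) :=
            mono (by omega)
          have e := ff_eq (a * m + 1) (b * m + t) t 0 1 (by omega)
          simp at e
          rw [e] at this
          nlinarith
        zify at g1 g2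
        have : 0 ≤ (m : ℤ) * k := by positivity
        have : 0 ≤ (m : ℤ) * k' := by linarith
        exact nonneg_of_mul_nonneg_right this h0
  · rintro x ⟨hx, hx2⟩
    obtain ⟨i, k, hi, rfl⟩ := repr_int m a b t hm x
    rw [key i hi] at hx
    have g1 := hx2 m ((mem_gen3 _ _ _ _).2 ⟨1, 0, 0, by ring⟩) (by omega)
    have g2 := hx2 (a * m + 1) ((mem_gen3 _ _ _ _).2 ⟨0, 1, 0, by ring⟩) (by omega)
    have g3 := hx2 (b * m + t) ((mem_gen3 _ _ _ _).2 ⟨0, 0, 1, by ring⟩) (by omega)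
    have hk : k = -1 := by
      have := (key i hi (k + 1)).1 (by convert g1 using 1; ring)
      omega
    subst hk
    by_cases him : i = m - 1
    · right
      subst him
      rw [Set.mem_singleton_iff, ← hF]; ring
    left
    obtain ⟨z, y, hy, rfl⟩ : ∃ z y, y < t ∧ i = z * t + y :=
      ⟨i / t, i % t, Nat.mod_lt _ (by omega), by rw [mul_comm]; exact (Nat.div_add_mod i t).symm⟩
    have f1 := ff_eq (a * m + 1) (b * m + t) t z y hy
    have hyt : y = t - 1 := by
      by_contra hne
      have f2 := ff_eq (a * m + 1) (b * m + t) t z (y + 1) (by omega)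
      have := (key (z * t + (y + 1)) (by omega) (-1)).1
        (by convert g2 using 1; rw [f1, f2]; push_cast; ring)
      omega
    have hit : m ≤ z * t + y + t := by
      by_contra hne
      have f2 := ff_eq (a * m + 1) (b * m + t) t (z + 1) y hy
      have := (key ((z + 1) * t + y) (by linarith) (-1)).1
        (by convert g3 using 1; rw [f1, f2]; push_cast; ring)
      omega
    have hqr : q * t + r = m - 1 := by
      rw [hq, hr, mul_comm]; exact Nat.div_add_mod _ _
    have hrt : r < t := by rw [hr]; exact Nat.mod_lt _ (by omega)
    have hz : q = z + 1 := by
      have a1 : z + 1 < q + 1 := by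
        by_contra hc
        have : (q + 1) * t ≤ (z + 1) * t := Nat.mul_le_mul_right _ (by omega)
        rw [add_mul, add_mul] at this
        omega
      have a2 : q < z + 2 := by
        by_contra hc
        have : (z + 2) * t ≤ q * t := Nat.mul_le_mul_right _ (by omega)
        rw [add_mul] at this
        omega
      omega
    rw [f1, hz, hyt]
    push_cast [Nat.cast_sub (by omega : 1 ≤ t)]
    ring
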